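/- Let V be a real vector space with finite dimension n, let C : Fin N → Set V be a finite family of convex sets, and let c : V → ℝ be a linear functional. Suppose the infimum v* of c over the intersection ⋂_i C i is attained at some point x*. Then there exists a subset S ⊆ Fin N with |S| ≤ n such that the infimum of c over the intersection ⋂_{i ∈ S} C i also equals v* (and is attained at x*). -/

import Mathlib

/-!
A value `v` bounds the objective below on a set exactly when that set misses the convex set `K` of
points with objective value less than `v`. Suppose `K` met every intersection of at most `n` of the
constraint sets, in dimension `n`. Then any `n + 1` sets from the family of `K` and the constraints
would have a common point: if `K` is among them, at most `n` constraints remain, and otherwise any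
feasible point will do. By Helly's theorem `K` would contain a feasible point.
-/

open Finset Module

section Helly

variable {𝕜 E ι : Type*}

theorem biInter_insertNone (F : Option ι → Set E) (s : Finset ι) :
    ⋂ o ∈ insertNone s, F o = F none ∩ ⋂ i ∈ s, F (some i) := by
  ext x
  simp [Option.forall]

variable [Field 𝕜] [LinearOrder 𝕜] [IsStrictOrderedRing 𝕜] [AddCommGroup E] [Module 𝕜 E]
  [FiniteDimensional 𝕜 E] {K : Set E} {C : ι → Set E} {s : Finset ι}

theorem inter_biInter_nonempty_of_forall_card_le_finrank (hK : Convex 𝕜 K)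
    (hC : ∀ i ∈ s, Convex 𝕜 (C i)) (hs : (⋂ i ∈ s, C i).Nonempty)
    (hKC : ∀ S ⊆ s, #S ≤ finrank 𝕜 E → (K ∩ ⋂ i ∈ S, C i).Nonempty) :
    (K ∩ ⋂ i ∈ s, C i).Nonempty := by
  classical
  let F : Option ι → Set E := fun o ↦ o.elim K C
  suffices h : (⋂ o ∈ insertNone s, F o).Nonempty by rwa [biInter_insertNone] at h
  refine Convex.helly_theorem' (𝕜 := 𝕜) (forall_mem_insertNone.2 ⟨hK, hC⟩) fun I hI hcard ↦ ?_
  have herase : eraseNone I ⊆ s := by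
    simpa only [eraseNone_insertNone] using eraseNone.monotone hI
  by_cases hnone : none ∈ I
  · have hinsert : insertNone (eraseNone I) = I := by
      rw [insertNone_eraseNone, insert_eq_of_mem hnone]
    rw [← hinsert, card_insertNone, Nat.add_le_add_iff_right] at hcard
    rw [← hinsert, biInter_insertNone]
    exact hKC _ herase hcard
  · have himage : (eraseNone I).image some = I := by
      rw [image_some_eraseNone, erase_eq_of_notMem hnone]
    rw [← himage, set_biInter_finset_image]
    exact hs.mono (Set.biInter_mono herase fun _ _ ↦ subset_rfl)

theorem exists_subset_card_le_finrank_disjoint_biInter (hK : Convex 𝕜 K)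
    (hC : ∀ i ∈ s, Convex 𝕜 (C i)) (hs : (⋂ i ∈ s, C i).Nonempty)
    (hdisj : Disjoint K (⋂ i ∈ s, C i)) :
    ∃ S ⊆ s, #S ≤ finrank 𝕜 E ∧ Disjoint K (⋂ i ∈ S, C i) := by
  contrapose! hdisj with h
  simp only [Set.not_disjoint_iff_nonempty_inter] at h ⊢
  exact inter_biInter_nonempty_of_forall_card_le_finrank hK hC hs h

theorem levin_support_scenarios_general {β : Type*} [LinearOrder β] {D : Set E} {f : E → β}
    {v : β} (hf : QuasiconvexOn 𝕜 D f) (hC : ∀ i ∈ s, Convex 𝕜 (C i))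
    (hs : (⋂ i ∈ s, C i).Nonempty) (hv : ∀ x ∈ D ∩ ⋂ i ∈ s, C i, v ≤ f x) :
    ∃ S ⊆ s, #S ≤ finrank 𝕜 E ∧ ∀ x ∈ D ∩ ⋂ i ∈ S, C i, v ≤ f x := by
  have hdisjoint (t : Set E) :
      Disjoint {x ∈ D | f x < v} t ↔ ∀ x ∈ D ∩ t, v ≤ f x := by
    grind
  simp only [← hdisjoint] at hv ⊢
  exact exists_subset_card_le_finrank_disjoint_biInter (hf.convex_lt v) hC hs hv

end Helly

/-- Levin's theorem as used in the paper: if a linear functional `c` attains its infimum `v*`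
over the intersection of `N` convex sets in an `n`-dimensional real vector space at a point
`x*`, then at most `n` of the sets already suffice: there is a subset `S` of the indices with
`|S| ≤ n` such that the infimum of `c` over `⋂ i ∈ S, C i` is also `v*`, attained at `x*`. -/
theorem levin_support_scenarios {V : Type*} [AddCommGroup V] [Module ℝ V]
    [FiniteDimensional ℝ V] (n : ℕ) (hn : Module.finrank ℝ V = n)
    (N : ℕ) (C : Fin N → Set V) (hC : ∀ i, Convex ℝ (C i))
    (c : V →ₗ[ℝ] ℝ) (vstar : ℝ) (xstar : V)
    (hxmem : xstar ∈ ⋂ i, C i) (hxval : c xstar = vstar)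
    (hmin : ∀ x ∈ ⋂ i, C i, vstar ≤ c x) :
    ∃ S : Finset (Fin N), S.card ≤ n ∧ (xstar ∈ ⋂ i ∈ S, C i) ∧
      ∀ x ∈ ⋂ i ∈ S, C i, vstar ≤ c x := by
  obtain ⟨S, -, hcard, hS⟩ := levin_support_scenarios_general (s := univ)
    (c.convexOn convex_univ).quasiconvexOn (fun i _ ↦ hC i) ⟨xstar, by simpa using hxmem⟩
    (by simpa using hmin)
  exact ⟨S, hn ▸ hcard, Set.iInter_subset_iInter₂ _ _ hxmem, by simpa using hS⟩
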